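/- Let V be a distribution of k-planes of class C¹ on ℝⁿ. Then there exists a k-dimensional embedded submanifold S of ℝⁿ of class C^{1,α} for every α ∈ (0,1) (i.e. S ∈ ⋂_{0<α<1} C^{1,α}) such that ℋ^k(τ(S,V)) > 0. -/

import Mathlib

noncomputable section
open MeasureTheory Set Module Filter Metric
open scoped ENNReal NNReal Topology RealInnerProductSpace

/-- `ℝⁿ` with the Euclidean norm. -/
abbrev Euc (n : ℕ) : Type := EuclideanSpace ℝ (Fin n)

variable {n : ℕ}

/-- A distribution of `k`-planes of class `C¹` on the open set `Ω ⊆ ℝⁿ`: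
a map into the Grassmannian `Gr(k,n)` that is locally spanned by `k`
vector fields of class `C¹`. -/
def IsC1PlaneField (k : ℕ) (Ω : Set (Euc n)) (V : Euc n → Submodule ℝ (Euc n)) : Prop :=
  IsOpen Ω ∧ (∀ x ∈ Ω, finrank ℝ (V x) = k) ∧
    ∀ x ∈ Ω, ∃ U : Set (Euc n), IsOpen U ∧ x ∈ U ∧ U ⊆ Ω ∧
      ∃ X : Fin k → Euc n → Euc n,
        (∀ i, ContDiffOn ℝ 1 (X i) U) ∧
        ∀ y ∈ U, V y = Submodule.span ℝ (Set.range fun i => X i y)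

/-- Tangency set of a surface `S` to the plane field `V`:
points of `S` where the tangent space of `S` (the tangent cone, which for a `C¹`
submanifold is exactly the classical tangent plane) coincides with `V(x)`. -/
def tangencySet (S : Set (Euc n)) (V : Euc n → Submodule ℝ (Euc n)) : Set (Euc n) :=
  {x ∈ S | tangentConeAt ℝ S x = (V x : Set (Euc n))}

/-- The graph map of `f : W → Wᗮ`. -/
def graphMap (W : Submodule ℝ (Euc n)) (f : ↥W → ↥Wᗮ) : ↥W → Euc n :=
  fun z => (z : Euc n) + (f z : Euc n)

/-- `S` is a `k`-dimensional embedded submanifold of `ℝⁿ` of class `C^{1,α}`: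
near each of its points it is the graph, over a `k`-plane `W`, of a `C¹` function
whose gradient is `α`-Hölder continuous. -/
def IsC1AlphaSubmanifold (k : ℕ) (α : ℝ) (S : Set (Euc n)) : Prop :=
  ∀ x ∈ S, ∃ (W : Submodule ℝ (Euc n)) (U : Set ↥W) (f : ↥W → ↥Wᗮ) (O : Set (Euc n)),
    finrank ℝ W = k ∧ IsOpen U ∧ ContDiffOn ℝ 1 f U ∧
    (∃ C : ℝ≥0, HolderOnWith C α.toNNReal (fun z => fderiv ℝ f z) U) ∧
    IsOpen O ∧ x ∈ O ∧ S ∩ O = (graphMap W f '' U) ∩ O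

/-! Near `x₀` the distribution is `x ↦ graph of g x` over `W = V x₀`, so the graph of `f : W → Wᗮ`
is tangent to it at `z + f z` as soon as `f' z = g (z + f z)`. For non-integrable `g` this cannot
hold on an open set. It is solved on a fat Cantor set `A`, consisting of the points that stay away
from the hyperplanes of nested grids of mesh `r j`, with `r j` decaying super-exponentially. In
every cell of the `j`-th grid the approximate solution is corrected to be affine with the slope
prescribed by an Euler step at a corner of the cell, and the correction is switched off by a
cutoff near the boundary of the cell. The derivative of the `j`-th correction has size of order
`r j` and a Lipschitz constant of order `1`, both up to powers of `r j / r (j + 1)`, which any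
positive power of `r j` absorbs; interpolating, the corrections sum up in `C^{1,α}` for every
`α < 1`. On `A` all cutoffs equal `1`, so the equation holds exactly in the limit. -/

section DerivativeBounds

variable {E F G : Type*} [NormedAddCommGroup E] [NormedSpace ℝ E] [NormedAddCommGroup F]
  [NormedSpace ℝ F] [NormedAddCommGroup G] [NormedSpace ℝ G]

/-- At `x`, the derivatives of `f` of order `m ≤ r` are bounded by `A * N ^ m`, as for an
oscillation of amplitude `A` and frequency `N`. Stating all orders at once makes the bounds stable
under products and compositions. -/
def HasDerivBounds (r : ℕ) (A N : ℝ) (f : E → F) (x : E) : Prop :=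
  ∀ m ≤ r, ‖iteratedFDeriv ℝ m f x‖ ≤ A * N ^ m

namespace HasDerivBounds

variable {r : ℕ} {A B N : ℝ} {x : E}

lemma nonneg {f : E → F} (hf : HasDerivBounds r A N f x) : 0 ≤ A := by
  simpa using (norm_nonneg _).trans (hf 0 r.zero_le)

lemma const (c : F) (hN : 0 ≤ N) : HasDerivBounds r ‖c‖ N (fun _ : E => c) x := by
  intro m _
  rcases m.eq_zero_or_pos with rfl | hm
  · simp
  · simp only [iteratedFDeriv_const_of_ne hm.ne', Pi.zero_apply, norm_zero]
    positivity

lemma sub {f g : E → F} (hfr : ContDiff ℝ r f) (hgr : ContDiff ℝ r g)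
    (hf : HasDerivBounds r A N f x) (hg : HasDerivBounds r B N g x) :
    HasDerivBounds r (A + B) N (f - g) x := by
  intro m hm
  have hm' : (m : WithTop ℕ∞) ≤ r := by exact_mod_cast hm
  rw [iteratedFDeriv_sub_apply (hfr.of_le hm').contDiffAt (hgr.of_le hm').contDiffAt, add_mul]
  exact (norm_sub_le _ _).trans (add_le_add (hf m hm) (hg m hm))

lemma smul {φ : E → ℝ} {f : E → F} (hN : 0 ≤ N) (hφr : ContDiff ℝ r φ) (hfr : ContDiff ℝ r f)
    (hφ : HasDerivBounds r A N φ x) (hf : HasDerivBounds r B N f x) :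
    HasDerivBounds r (2 ^ r * (A * B)) N (fun y => φ y • f y) x := by
  intro m hm
  have hA := hφ.nonneg
  have hB := hf.nonneg
  calc ‖iteratedFDeriv ℝ m (fun y => φ y • f y) x‖
      ≤ ∑ i ∈ Finset.range (m + 1), (m.choose i : ℝ) * ‖iteratedFDeriv ℝ i φ x‖ *
          ‖iteratedFDeriv ℝ (m - i) f x‖ :=
        norm_iteratedFDeriv_smul_le hφr hfr x (by exact_mod_cast hm)
    _ ≤ ∑ i ∈ Finset.range (m + 1), (m.choose i : ℝ) * (A * B * N ^ m) := by
        refine Finset.sum_le_sum fun i hi => ?_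
        have him : i ≤ m := Nat.lt_succ_iff.1 (Finset.mem_range.1 hi)
        calc (m.choose i : ℝ) * ‖iteratedFDeriv ℝ i φ x‖ * ‖iteratedFDeriv ℝ (m - i) f x‖
            ≤ m.choose i * (A * N ^ i) * (B * N ^ (m - i)) := by
              gcongr
              · exact hφ i (him.trans hm)
              · exact hf (m - i) ((m.sub_le i).trans hm)
          _ = m.choose i * (A * B * (N ^ i * N ^ (m - i))) := by ring
          _ = m.choose i * (A * B * N ^ m) := by rw [pow_mul_pow_sub N him]
    _ = 2 ^ m * (A * B) * N ^ m := by
        have hchoose : ∑ i ∈ Finset.range (m + 1), (m.choose i : ℝ) = 2 ^ m := by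
          exact_mod_cast Nat.sum_range_choose m
        rw [← Finset.sum_mul, hchoose]
        ring
    _ ≤ 2 ^ r * (A * B) * N ^ m := by
        gcongr
        norm_num

lemma prod {ι : Type*} {φ : ι → E → ℝ} (hN : 0 ≤ N) (hφr : ∀ i, ContDiff ℝ r (φ i))
    (hφ : ∀ i, HasDerivBounds r A N (φ i) x) (s : Finset ι) :
    HasDerivBounds r ((2 ^ r * A) ^ s.card) N (fun y => ∏ i ∈ s, φ i y) x := by
  classical
  induction s using Finset.induction_on with
  | empty => simpa using const (r := r) (x := x) (1 : ℝ) hN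
  | insert a s ha ih =>
    have h := smul hN (hφr a) (contDiff_prod fun i _ => hφr i) (hφ a) ih
    simp only [Finset.prod_insert ha, Finset.card_insert_of_notMem ha]
    rw [pow_succ']
    simpa only [smul_eq_mul, mul_assoc] using h

lemma comp {f : F → G} {u : E → F} (hfr : ContDiff ℝ r f) (hur : ContDiff ℝ r u)
    (hf : HasDerivBounds r A 1 f (u x))
    (hu : ∀ m, 1 ≤ m → m ≤ r → ‖iteratedFDeriv ℝ m u x‖ ≤ N ^ m) (hN : 0 ≤ N) :
    HasDerivBounds r (r.factorial * A) N (f ∘ u) x := by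
  intro m hm
  have hA := hf.nonneg
  calc ‖iteratedFDeriv ℝ m (f ∘ u) x‖ ≤ m.factorial * A * N ^ m :=
        norm_iteratedFDeriv_comp_le hfr hur (by exact_mod_cast hm) x
          (fun i hi => by simpa using hf i (hi.trans hm))
          (fun i hi him => hu i hi (him.trans hm))
    _ ≤ r.factorial * A * N ^ m := by gcongr

lemma clm_comp_sub (T : E →L[ℝ] F) {p : E} {ρ : ℝ} (hN : 0 ≤ N) (hp : ‖x - p‖ ≤ ρ)
    (hρN : 1 ≤ ρ * N) : HasDerivBounds r (‖T‖ * ρ) N (fun y => T (y - p)) x := by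
  have hρ : 0 ≤ ρ := (norm_nonneg _).trans hp
  have hderiv : fderiv ℝ (fun y => T (y - p)) = fun _ => T := by
    ext1 y
    exact (T.hasFDerivAt.comp y ((hasFDerivAt_id y).sub_const p)).fderiv
  intro m _
  match m with
  | 0 => simpa using T.le_opNorm_of_le hp
  | 1 =>
    rw [norm_iteratedFDeriv_one, hderiv, pow_one, mul_assoc]
    exact le_mul_of_one_le_right (norm_nonneg T) hρN
  | m + 2 =>
    rw [← norm_iteratedFDeriv_fderiv, hderiv, iteratedFDeriv_const_of_ne m.succ_ne_zero,
      Pi.zero_apply, norm_zero]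
    positivity

end HasDerivBounds

lemma exists_forall_hasDerivBounds_of_hasCompactSupport {f : E → F} {r : ℕ} (hf : ContDiff ℝ r f)
    (hsupp : HasCompactSupport f) : ∃ A, ∀ x, HasDerivBounds r A 1 f x := by
  have hbound : ∀ m : ℕ, ∃ A, m ≤ r → ∀ x, ‖iteratedFDeriv ℝ m f x‖ ≤ A := by
    intro m
    by_cases hm : m ≤ r
    · obtain ⟨A, hA⟩ := (hf.continuous_iteratedFDeriv (by exact_mod_cast hm)
        ).bounded_above_of_compact_support (hsupp.iteratedFDeriv m)
      exact ⟨A, fun _ => hA⟩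
    · exact ⟨0, fun h => absurd h hm⟩
  choose A hA using hbound
  refine ⟨∑ m ∈ Finset.range (r + 1), |A m|, fun x m hm => ?_⟩
  rw [one_pow, mul_one]
  exact (hA m hm x).trans ((le_abs_self _).trans (Finset.single_le_sum
    (f := fun m => |A m|) (fun _ _ => abs_nonneg _) (Finset.mem_range.2 (Nat.lt_succ_of_le hm))))

lemma norm_iteratedFDeriv_sin_comp_clm_le (ℓ : E →L[ℝ] ℝ) (m : ℕ) (x : E) :
    ‖iteratedFDeriv ℝ m (fun y => Real.sin (ℓ y)) x‖ ≤ ‖ℓ‖ ^ m := by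
  have hcomp := ℓ.iteratedFDeriv_comp_right Real.contDiff_sin x (i := m) le_rfl
  calc ‖iteratedFDeriv ℝ m (Real.sin ∘ ℓ) x‖
      ≤ ‖iteratedFDeriv ℝ m Real.sin (ℓ x)‖ * ∏ _i : Fin m, ‖ℓ‖ := by
        rw [hcomp]
        exact ContinuousMultilinearMap.norm_compContinuousLinearMap_le _ _
    _ ≤ 1 * ∏ _i : Fin m, ‖ℓ‖ := by
        gcongr
        rw [norm_iteratedFDeriv_eq_norm_iteratedDeriv]
        exact Real.abs_iteratedDeriv_sin_le_one m (ℓ x)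
    _ = ‖ℓ‖ ^ m := by simp

end DerivativeBounds

section GridCutoff

/-- A smooth function on `ℝ` that vanishes on `[-1, 1]` and is `1` outside `(-2, 2)`. -/
def gapProfile : ℝ → ℝ :=
  1 - ((⟨1, 2, one_pos, one_lt_two⟩ : ContDiffBump (0 : ℝ)) : ℝ → ℝ)

lemma contDiff_gapProfile {m : ℕ} : ContDiff ℝ m gapProfile :=
  contDiff_const.sub (ContDiffBump.contDiff _)

lemma gapProfile_of_abs_le_one {t : ℝ} (ht : |t| ≤ 1) : gapProfile t = 0 := by
  rw [gapProfile, Pi.sub_apply, ContDiffBump.one_of_mem_closedBall, Pi.one_apply, sub_self]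
  simpa using ht

lemma gapProfile_of_two_le_abs {t : ℝ} (ht : 2 ≤ |t|) : gapProfile t = 1 := by
  rw [gapProfile, Pi.sub_apply, ContDiffBump.zero_of_le_dist, Pi.one_apply, sub_zero]
  simpa using ht

lemma exists_forall_hasDerivBounds_gapProfile (m : ℕ) :
    ∃ A, ∀ t, HasDerivBounds m A 1 gapProfile t := by
  let b : ContDiffBump (0 : ℝ) := ⟨1, 2, one_pos, one_lt_two⟩
  obtain ⟨A, hA⟩ :=
    exists_forall_hasDerivBounds_of_hasCompactSupport (r := m) b.contDiff b.hasCompactSupport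
  exact ⟨‖(1 : ℝ)‖ + A, fun t =>
    (HasDerivBounds.const 1 zero_le_one).sub contDiff_const b.contDiff (hA t)⟩

variable {ι : Type*} [Fintype ι]

/-- A smooth cutoff vanishing near the hyperplanes `{z i ∈ r ℤ}` and equal to `1` at distance more
than `r / Λ` from all of them. The sine makes it periodic, so that it is smooth by construction. -/
def gridCutoff (Λ r : ℝ) (z : ι → ℝ) : ℝ :=
  ∏ i, gapProfile (Λ * Real.sin (Real.pi / r * z i))

/-- The reals whose distance to the grid `r ℤ` exceeds `δ`. -/
def awayFromGrid (δ r : ℝ) : Set ℝ :=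
  {t | ∀ n : ℤ, δ < |t - n * r|}

variable {Λ r : ℝ}

private lemma contDiff_gridCutoff_factor {m : ℕ} (i : ι) :
    ContDiff ℝ m fun z : ι → ℝ => gapProfile (Λ * Real.sin (Real.pi / r * z i)) :=
  contDiff_gapProfile.comp (by fun_prop)

lemma contDiff_gridCutoff {m : ℕ} : ContDiff ℝ m (gridCutoff Λ r : (ι → ℝ) → ℝ) :=
  contDiff_prod fun i _ => contDiff_gridCutoff_factor i

lemma norm_iteratedFDeriv_mul_sin_le (i : ι) (hΛ : 1 ≤ Λ) {c : ℝ} (hc : 0 ≤ c) {m : ℕ}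
    (hm : 1 ≤ m) (z : ι → ℝ) :
    ‖iteratedFDeriv ℝ m (fun z : ι → ℝ => Λ * Real.sin (c * z i)) z‖ ≤ (c * Λ) ^ m := by
  let ℓ : (ι → ℝ) →L[ℝ] ℝ := c • ContinuousLinearMap.proj i
  have hℓ : ‖ℓ‖ ≤ c := by
    refine ContinuousLinearMap.opNorm_le_bound _ hc fun x => ?_
    simpa [ℓ, abs_of_nonneg hc] using mul_le_mul_of_nonneg_left (norm_le_pi_norm x i) hc
  have hsmul : iteratedFDeriv ℝ m (Λ • fun z : ι → ℝ => Real.sin (c * z i)) z =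
      Λ • iteratedFDeriv ℝ m (fun z => Real.sin (ℓ z)) z :=
    iteratedFDeriv_const_smul_apply (Real.contDiff_sin.comp ℓ.contDiff).contDiffAt
  calc ‖iteratedFDeriv ℝ m (fun z : ι → ℝ => Λ * Real.sin (c * z i)) z‖
      = ‖Λ • iteratedFDeriv ℝ m (fun z => Real.sin (ℓ z)) z‖ := congrArg norm hsmul
    _ = Λ * ‖iteratedFDeriv ℝ m (fun z => Real.sin (ℓ z)) z‖ := by
        rw [norm_smul, Real.norm_of_nonneg (by linarith)]
    _ ≤ Λ ^ m * c ^ m := by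
        gcongr
        · exact le_self_pow₀ hΛ (by omega)
        · exact (norm_iteratedFDeriv_sin_comp_clm_le ℓ m z).trans (by gcongr)
    _ = (c * Λ) ^ m := by rw [mul_pow, mul_comm]

variable (ι) in
lemma exists_forall_hasDerivBounds_gridCutoff (m : ℕ) :
    ∃ A, ∀ Λ r : ℝ, 1 ≤ Λ → 0 < r → ∀ z : ι → ℝ,
      HasDerivBounds m A (Real.pi / r * Λ) (gridCutoff Λ r) z := by
  obtain ⟨A, hA⟩ := exists_forall_hasDerivBounds_gapProfile m
  refine ⟨(2 ^ m * (m.factorial * A)) ^ (Finset.univ : Finset ι).card, fun Λ r hΛ hr z => ?_⟩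
  have hc : 0 ≤ Real.pi / r := by positivity
  have hN : 0 ≤ Real.pi / r * Λ := by positivity
  exact HasDerivBounds.prod hN (fun i => contDiff_gridCutoff_factor i)
    (fun i => (hA _).comp contDiff_gapProfile (by fun_prop)
      (fun l hl _ => norm_iteratedFDeriv_mul_sin_le i hΛ hc hl z) hN) Finset.univ

lemma gridCutoff_eventuallyEq_zero {z : ι → ℝ} {i : ι} {n : ℤ} (hr : r ≠ 0) (hz : z i = n * r) :
    (gridCutoff Λ r : (ι → ℝ) → ℝ) =ᶠ[𝓝 z] 0 := by
  have hcont : Continuous fun w : ι → ℝ => |Λ * Real.sin (Real.pi / r * w i)| := by fun_prop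
  have hsin : Real.sin (Real.pi / r * z i) = 0 :=
    Real.sin_eq_zero_iff.2 ⟨n, by rw [hz]; field_simp⟩
  have hlt : |Λ * Real.sin (Real.pi / r * z i)| < 1 := by simp [hsin]
  filter_upwards [hcont.continuousAt.eventually_lt_const hlt] with w hw
  exact Finset.prod_eq_zero (Finset.mem_univ i) (gapProfile_of_abs_le_one hw.le)

lemma two_lt_abs_mul_sin_of_mem_awayFromGrid (hΛ : 0 < Λ) (hr : 0 < r) {t : ℝ}
    (ht : t ∈ awayFromGrid (r / Λ) r) : 2 < |Λ * Real.sin (Real.pi / r * t)| := by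
  have hpi := Real.pi_pos
  set n := round (t / r)
  have hn : |t / r - n| ≤ 1 / 2 := abs_sub_round _
  have hjordan : 2 * |t / r - n| ≤ |Real.sin (Real.pi / r * t)| :=
    calc 2 * |t / r - n| = 2 / Real.pi * |Real.pi * (t / r - n)| := by
          rw [abs_mul, abs_of_pos hpi]
          field_simp
      _ ≤ |Real.sin (Real.pi * (t / r - n))| := by
          refine Real.mul_abs_le_abs_sin ?_
          rw [abs_mul, abs_of_pos hpi]
          nlinarith
      _ = |Real.sin (Real.pi / r * t)| := by
          rw [show Real.pi * (t / r - n) = Real.pi / r * t - n * Real.pi by ring,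
            Real.sin_sub_int_mul_pi]
          simp [abs_mul]
  have hdist : r / Λ < r * |t / r - n| := by
    rw [← abs_of_pos hr, ← abs_mul, abs_of_pos hr, mul_sub, mul_div_cancel₀ _ hr.ne', mul_comm r]
    exact ht n
  rw [div_lt_iff₀ hΛ, mul_assoc, lt_mul_iff_one_lt_right hr] at hdist
  rw [abs_mul, abs_of_pos hΛ]
  nlinarith

lemma gridCutoff_eventuallyEq_one (hΛ : 0 < Λ) (hr : 0 < r) {z : ι → ℝ}
    (hz : ∀ i, z i ∈ awayFromGrid (r / Λ) r) : (gridCutoff Λ r : (ι → ℝ) → ℝ) =ᶠ[𝓝 z] 1 := by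
  have hnear : ∀ i, ∀ᶠ w : ι → ℝ in 𝓝 z, 2 < |Λ * Real.sin (Real.pi / r * w i)| := fun i =>
    have hcont : Continuous fun w : ι → ℝ => |Λ * Real.sin (Real.pi / r * w i)| := by fun_prop
    hcont.continuousAt.eventually_const_lt (two_lt_abs_mul_sin_of_mem_awayFromGrid hΛ hr (hz i))
  filter_upwards [eventually_all.2 hnear] with w hw
  exact Finset.prod_eq_one fun i _ => gapProfile_of_two_le_abs (hw i).le

end GridCutoff

section GridPoint

variable {ι : Type*} {r : ℝ}

/-- The corner, with coordinates in `r ℤ`, of the grid cube of side `r` that contains `z`. -/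
def gridPoint (r : ℝ) (z : ι → ℝ) : ι → ℝ :=
  fun i => r * ⌊z i / r⌋

lemma gridPoint_zero : gridPoint r (0 : ι → ℝ) = 0 := by
  ext i
  simp [gridPoint]

lemma norm_sub_gridPoint_le [Fintype ι] (hr : 0 < r) (z : ι → ℝ) : ‖z - gridPoint r z‖ ≤ r := by
  rw [pi_norm_le_iff_of_nonneg hr.le]
  intro i
  have hlow := Int.floor_le (z i / r)
  have hup := (Int.lt_floor_add_one (z i / r)).le
  rw [le_div_iff₀ hr] at hlow
  rw [div_le_iff₀ hr] at hup
  simp only [gridPoint, Pi.sub_apply, Real.norm_eq_abs, abs_le]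
  constructor <;> linarith

lemma gridPoint_eq_of_gridPoint_eq (hr : 0 < r) (Λ : ℕ) {z w : ι → ℝ}
    (h : gridPoint r w = gridPoint r z) : gridPoint (Λ * r) w = gridPoint (Λ * r) z := by
  have hcoarse : ∀ t : ℝ, ⌊t / (Λ * r)⌋ = ⌊t / r⌋ / (Λ : ℤ) := fun t => by
    rw [← Int.floor_div_natCast, div_div, mul_comm]
  ext i
  have hfloor : ⌊w i / r⌋ = ⌊z i / r⌋ := by
    exact_mod_cast mul_left_cancel₀ hr.ne' (congrFun h i)
  rw [gridPoint, gridPoint, hcoarse, hcoarse, hfloor]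

lemma gridPoint_eventually_eq [Finite ι] (hr : r ≠ 0) {z : ι → ℝ} (hz : ∀ i, ∀ n : ℤ, z i ≠ n * r) :
    ∀ᶠ w in 𝓝 z, gridPoint r w = gridPoint r z := by
  have hfloor : ∀ i, ∀ᶠ w : ι → ℝ in 𝓝 z, ⌊w i / r⌋ = ⌊z i / r⌋ := by
    intro i
    have hcont : Continuous fun w : ι → ℝ => w i / r := by fun_prop
    have hlow : (⌊z i / r⌋ : ℝ) < z i / r := (Int.floor_le _).lt_of_ne fun h =>
      hz i _ ((div_eq_iff hr).1 h.symm)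
    filter_upwards [hcont.continuousAt.eventually_const_lt hlow,
      hcont.continuousAt.eventually_lt_const (Int.lt_floor_add_one _)] with w hlow' hup'
    exact Int.floor_eq_iff.2 ⟨hlow'.le, hup'⟩
  filter_upwards [eventually_all.2 hfloor] with w hw
  ext i
  rw [gridPoint, gridPoint, hw i]

end GridPoint

section ScaleSequence

/-- Grid sizes `r j` with integer ratios `Λ j = r j / r (j + 1)`, so that the grids `r j ℤ` are
nested. -/
structure IsScaleSequence (r : ℕ → ℝ) (Λ : ℕ → ℕ) : Prop where
  pos : ∀ j, 0 < r j
  two_le : ∀ j, 2 ≤ Λ j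
  monotone : Monotone Λ
  eq_mul : ∀ j, r j = Λ j * r (j + 1)

namespace IsScaleSequence

variable {r : ℕ → ℝ} {Λ : ℕ → ℕ}

lemma two_le_cast (h : IsScaleSequence r Λ) (j : ℕ) : (2 : ℝ) ≤ Λ j := by
  exact_mod_cast h.two_le j

lemma two_mul_succ_le (h : IsScaleSequence r Λ) (j : ℕ) : 2 * r (j + 1) ≤ r j := by
  rw [h.eq_mul j]
  exact mul_le_mul_of_nonneg_right (h.two_le_cast j) (h.pos _).le

lemma le_geometric (h : IsScaleSequence r Λ) (j : ℕ) : r j ≤ r 0 * (1 / 2) ^ j := by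
  induction j with
  | zero => simp
  | succ j ih =>
    have := h.two_mul_succ_le j
    rw [pow_succ]
    linarith

lemma tendsto_zero (h : IsScaleSequence r Λ) : Tendsto r atTop (𝓝 0) :=
  squeeze_zero (fun j => (h.pos j).le) h.le_geometric <| by
    simpa using (tendsto_pow_atTop_nhds_zero_of_lt_one (r := (1 / 2 : ℝ)) (by norm_num)
      (by norm_num)).const_mul (r 0)

lemma exists_zero_eq_natCast_mul (h : IsScaleSequence r Λ) (j : ℕ) : ∃ R : ℕ, r 0 = R * r j := by
  induction j with
  | zero => exact ⟨1, by simp⟩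
  | succ j ih =>
    obtain ⟨R, hR⟩ := ih
    exact ⟨R * Λ j, by rw [hR, h.eq_mul j]; push_cast; ring⟩

/-- The ratio test applies since `r (j + 1) ^ b = r j ^ b * Λ j ^ (-b)` and `Λ j ^ (-b) → 0`. -/
lemma summable_rpow_mul_pow (h : IsScaleSequence r Λ) (hΛ : Tendsto Λ atTop atTop) {C : ℕ}
    (hC : ∀ j, Λ (j + 1) ≤ C * Λ j) {b : ℝ} (hb : 0 < b) (m : ℕ) :
    Summable fun j => r j ^ b * (Λ j : ℝ) ^ m := by
  have hpos : ∀ j, 0 < r j ^ b * (Λ j : ℝ) ^ m := fun j =>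
    mul_pos (Real.rpow_pos_of_pos (h.pos j) b) (pow_pos (by linarith [h.two_le_cast j]) m)
  have hstep : ∀ j, r (j + 1) ^ b * (Λ (j + 1) : ℝ) ^ m ≤
      (C : ℝ) ^ m * (Λ j : ℝ) ^ (-b) * (r j ^ b * (Λ j : ℝ) ^ m) := fun j => by
    have hΛj : (0 : ℝ) < Λ j := by linarith [h.two_le_cast j]
    have hcancel : (Λ j : ℝ) ^ (-b) * (Λ j : ℝ) ^ b = 1 := by
      rw [← Real.rpow_add hΛj, neg_add_cancel, Real.rpow_zero]
    calc r (j + 1) ^ b * (Λ (j + 1) : ℝ) ^ m ≤ r (j + 1) ^ b * (C * Λ j : ℝ) ^ m := by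
          have := (h.pos (j + 1)).le
          gcongr
          exact_mod_cast hC j
      _ = (C : ℝ) ^ m * ((Λ j : ℝ) ^ (-b) * (Λ j : ℝ) ^ b) * (r (j + 1) ^ b * (Λ j : ℝ) ^ m) := by
          rw [hcancel, mul_pow]
          ring
      _ = (C : ℝ) ^ m * (Λ j : ℝ) ^ (-b) * (r j ^ b * (Λ j : ℝ) ^ m) := by
          rw [h.eq_mul j, Real.mul_rpow hΛj.le (h.pos _).le]
          ring
  have hratio : Tendsto (fun j => (C : ℝ) ^ m * (Λ j : ℝ) ^ (-b)) atTop (𝓝 0) := by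
    simpa using ((tendsto_rpow_neg_atTop hb).comp
      (tendsto_natCast_atTop_atTop.comp hΛ)).const_mul ((C : ℝ) ^ m)
  refine summable_of_ratio_norm_eventually_le (r := 1 / 2) (by norm_num) ?_
  filter_upwards [hratio.eventually_le_const (by norm_num : (0 : ℝ) < 1 / 2)] with j hj
  rw [Real.norm_of_nonneg (hpos _).le, Real.norm_of_nonneg (hpos _).le]
  exact (hstep j).trans (mul_le_mul_of_nonneg_right hj (hpos j).le)

end IsScaleSequence

lemma exists_isScaleSequence {δ : ℝ} (hδ : 0 < δ) :
    ∃ (r : ℕ → ℝ) (Λ : ℕ → ℕ), IsScaleSequence r Λ ∧ r 0 ≤ δ ∧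
      (∀ b : ℝ, 0 < b → ∀ m : ℕ, Summable fun j => r j ^ b * (Λ j : ℝ) ^ m) ∧
      ∃ s < 1, HasSum (fun j => 4 / (Λ j : ℝ)) s := by
  have hscale : IsScaleSequence (fun j => δ * (1 / 2) ^ ((j + 1) ^ 2)) fun j => 2 ^ (2 * j + 3) :=
    { pos := fun j => by positivity
      two_le := fun j => le_self_pow₀ one_le_two (by omega)
      monotone := fun i j hij => Nat.pow_le_pow_right two_pos (by omega)
      eq_mul := fun j => by
        have hsq : (j + 1 + 1) ^ 2 = (j + 1) ^ 2 + (2 * j + 3) := by ring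
        have hinv : (2 : ℝ) ^ (2 * j + 3) * (1 / 2) ^ (2 * j + 3) = 1 := by
          rw [← mul_pow]
          norm_num
        rw [hsq, pow_add (1 / 2 : ℝ)]
        push_cast
        linear_combination (-δ * (1 / 2) ^ ((j + 1) ^ 2)) * hinv }
  have hΛ : Tendsto (fun j : ℕ => 2 ^ (2 * j + 3)) atTop atTop :=
    (tendsto_pow_atTop_atTop_of_one_lt one_lt_two).comp
      (tendsto_atTop_mono (fun j => show j ≤ 2 * j + 3 by omega) tendsto_id)
  refine ⟨_, _, hscale, by norm_num; linarith,
    fun b hb => hscale.summable_rpow_mul_pow hΛ (C := 4) (fun j => le_of_eq (by ring)) hb,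
    1 / 2 * (1 - 1 / 4)⁻¹, by norm_num, ?_⟩
  have hgeom := (hasSum_geometric_of_lt_one (r := (1 / 4 : ℝ)) (by norm_num)
    (by norm_num)).mul_left (1 / 2)
  refine hgeom.congr_fun fun j => ?_
  have hpow : (2 : ℝ) ^ (2 * j + 3) = 8 * 4 ^ j := by rw [pow_add, pow_mul]; norm_num; ring
  push_cast
  rw [hpow, one_div_pow]
  field_simp
  norm_num

end ScaleSequence

section FatCantorSet

/-- The points of `[0, r 0)` at distance more than `r j / Λ j` from the grid `r j ℤ`, for every
`j`. -/
def fatCantorSet (r : ℕ → ℝ) (Λ : ℕ → ℕ) : Set ℝ :=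
  Ico 0 (r 0) ∩ ⋂ j, awayFromGrid (r j / Λ j) (r j)

lemma volume_Ico_diff_awayFromGrid_le {r δ : ℝ} (hr : 0 < r) (hδ : δ < r) (R : ℕ) :
    volume (Ico 0 (R * r) \ awayFromGrid δ r) ≤ (R + 1) * ENNReal.ofReal (2 * δ) := by
  have hcover : Ico 0 (R * r) \ awayFromGrid δ r ⊆
      ⋃ n ∈ Finset.range (R + 1), Icc ((n : ℝ) * r - δ) (n * r + δ) := by
    rintro t ⟨⟨ht0, htR⟩, ht⟩
    simp only [awayFromGrid, mem_ofPred_eq, not_forall, not_lt] at ht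
    obtain ⟨n, hn⟩ := ht
    rw [abs_le] at hn
    have hn0 : 0 ≤ n := by
      have : (-1 : ℝ) < n := lt_of_mul_lt_mul_right (by linarith) hr.le
      have : (-1 : ℤ) < n := by exact_mod_cast this
      omega
    have hnR : (n : ℝ) < R + 1 := lt_of_mul_lt_mul_right (by linarith) hr.le
    lift n to ℕ using hn0
    rw [Int.cast_natCast] at hn hnR
    exact mem_biUnion (Finset.mem_coe.2 (Finset.mem_range.2 (by exact_mod_cast hnR)))
      ⟨by linarith, by linarith⟩
  calc volume (Ico 0 (R * r) \ awayFromGrid δ r)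
      ≤ ∑ n ∈ Finset.range (R + 1), volume (Icc ((n : ℝ) * r - δ) (n * r + δ)) :=
        (measure_mono hcover).trans (measure_biUnion_finset_le _ _)
    _ = (R + 1) * ENNReal.ofReal (2 * δ) := by
        simp [Real.volume_Icc, two_mul]

namespace IsScaleSequence

variable {r : ℕ → ℝ} {Λ : ℕ → ℕ}

lemma volume_Ico_diff_awayFromGrid_le (h : IsScaleSequence r Λ) (j : ℕ) :
    volume (Ico 0 (r 0) \ awayFromGrid (r j / Λ j) (r j)) ≤
      ENNReal.ofReal (r 0 * (4 / Λ j)) := by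
  have hr := h.pos j
  have hΛ := h.two_le_cast j
  obtain ⟨R, hR⟩ := h.exists_zero_eq_natCast_mul j
  have hR1 : (1 : ℝ) ≤ R := by
    have : R ≠ 0 := by
      rintro rfl
      simpa [hR] using h.pos 0
    exact_mod_cast Nat.one_le_iff_ne_zero.2 this
  calc volume (Ico 0 (r 0) \ awayFromGrid (r j / Λ j) (r j))
      ≤ (R + 1) * ENNReal.ofReal (2 * (r j / Λ j)) := by
        rw [hR]
        exact _root_.volume_Ico_diff_awayFromGrid_le hr (div_lt_self hr (by linarith)) R
    _ = ENNReal.ofReal ((R + 1) * (2 * (r j / Λ j))) := by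
        have hcast : ENNReal.ofReal ((R : ℝ) + 1) = R + 1 := by
          exact_mod_cast ENNReal.ofReal_natCast (R + 1)
        rw [ENNReal.ofReal_mul (p := (R : ℝ) + 1) (by positivity), hcast]
    _ ≤ ENNReal.ofReal (r 0 * (4 / Λ j)) := by
        refine ENNReal.ofReal_le_ofReal ?_
        calc ((R : ℝ) + 1) * (2 * (r j / Λ j)) ≤ (R + R) * (2 * (r j / Λ j)) := by gcongr
          _ = r 0 * (4 / Λ j) := by rw [hR]; ring

lemma volume_fatCantorSet_pos (h : IsScaleSequence r Λ) {s : ℝ} (hs : s < 1)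
    (hsum : HasSum (fun j => 4 / (Λ j : ℝ)) s) : 0 < volume (fatCantorSet r Λ) := by
  rw [pos_iff_ne_zero]
  intro hzero
  have hcover : Ico 0 (r 0) ⊆
      fatCantorSet r Λ ∪ ⋃ j, Ico 0 (r 0) \ awayFromGrid (r j / Λ j) (r j) := by
    rw [← sdiff_iInter, fatCantorSet, inter_union_sdiff]
  have hle : ENNReal.ofReal (r 0) ≤ ENNReal.ofReal (r 0 * s) :=
    calc ENNReal.ofReal (r 0) = volume (Ico 0 (r 0)) := by simp
      _ ≤ volume (fatCantorSet r Λ) +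
            ∑' j, volume (Ico 0 (r 0) \ awayFromGrid (r j / Λ j) (r j)) :=
          (measure_mono hcover).trans ((measure_union_le _ _).trans
            (add_le_add_right (measure_iUnion_le _) _))
      _ ≤ ∑' j, ENNReal.ofReal (r 0 * (4 / Λ j)) := by
          rw [hzero, zero_add]
          exact ENNReal.tsum_le_tsum h.volume_Ico_diff_awayFromGrid_le
      _ = ENNReal.ofReal (r 0 * s) := by
          have hsum' := hsum.mul_left (r 0)
          rw [← hsum'.tsum_eq, ENNReal.ofReal_tsum_of_nonneg _ hsum'.summable]
          exact fun j => mul_nonneg (h.pos 0).le (by positivity)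
  have hs0 : 0 ≤ s := hsum.nonneg fun j => by positivity
  rw [ENNReal.ofReal_le_ofReal_iff (mul_nonneg (h.pos 0).le hs0)] at hle
  nlinarith [h.pos 0]

end IsScaleSequence

end FatCantorSet

section HolderSeries

variable {X F : Type*} [PseudoMetricSpace X] [NormedAddCommGroup F]

lemma holderWith_of_norm_le_of_lipschitzWith {f : X → F}
    {A K α : ℝ≥0} (hα : α ≤ 1) (hA : ∀ x, ‖f x‖ ≤ A) (hK : LipschitzWith K f) :
    HolderWith ((2 * A) ^ ((1 - α : ℝ≥0) : ℝ) * K ^ (α : ℝ)) α f := by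
  have hzero : HolderWith (2 * A) 0 f := fun x y => by
    have hdist : nndist (f x) (f y) ≤ 2 * A := by
      rw [← NNReal.coe_le_coe, coe_nndist, two_mul]
      exact (dist_le_norm_add_norm _ _).trans (add_le_add (hA x) (hA y))
    rw [NNReal.coe_zero, ENNReal.rpow_zero, mul_one, edist_nndist]
    exact_mod_cast hdist
  simpa using hzero.interpolate (holderWith_one.2 hK) (tsub_add_cancel_of_le hα)

lemma holderWith_tsum {f : ℕ → X → F} {C : ℕ → ℝ≥0} {α : ℝ≥0}
    (hC : Summable C) (hf : ∀ j, HolderWith (C j) α (f j)) (hsum : ∀ x, Summable fun j => f j x) :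
    HolderWith (∑' j, C j) α fun x => ∑' j, f j x := by
  intro x y
  have hle : ‖∑' j, (f j x - f j y)‖ ≤ (∑' j, C j : ℝ≥0) * dist x y ^ (α : ℝ) := by
    refine tsum_of_norm_bounded ((NNReal.hasSum_coe.2 hC.hasSum).mul_right _) fun j => ?_
    rw [← dist_eq_norm]
    exact (hf j).dist_le x y
  rw [(hsum x).tsum_sub (hsum y), ← dist_eq_norm] at hle
  have hle' : nndist (∑' j, f j x) (∑' j, f j y) ≤ (∑' j, C j) * nndist x y ^ (α : ℝ) := by
    exact_mod_cast hle
  simp only [edist_nndist]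
  rw [← ENNReal.coe_rpow_of_nonneg _ α.coe_nonneg]
  exact_mod_cast hle'

lemma holderWith_fderiv_tsum {E : Type*} [NormedAddCommGroup E] [NormedSpace ℝ E]
    [NormedSpace ℝ F] [CompleteSpace F] {g : ℕ → E → F} {a K : ℕ → ℝ≥0} {α : ℝ≥0}
    (hα : α ≤ 1) (hg : ∀ j, Differentiable ℝ (g j)) (ha : ∀ j x, ‖fderiv ℝ (g j) x‖ ≤ a j)
    (hK : ∀ j, LipschitzWith (K j) (fderiv ℝ (g j))) (hsum_a : Summable a)
    (hsum_aK : Summable fun j => (2 * a j) ^ ((1 - α : ℝ≥0) : ℝ) * K j ^ (α : ℝ))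
    {x₀ : E} (hx₀ : Summable fun j => g j x₀) :
    HolderWith (∑' j, (2 * a j) ^ ((1 - α : ℝ≥0) : ℝ) * K j ^ (α : ℝ)) α
      (fderiv ℝ fun x => ∑' j, g j x) := by
  have hsum : Summable fun j => (a j : ℝ) := NNReal.summable_coe.2 hsum_a
  rw [fderiv_tsum hsum hg ha hx₀]
  exact holderWith_tsum hsum_aK
    (fun j => holderWith_of_norm_le_of_lipschitzWith hα (ha j) (hK j))
    fun x => hsum.of_norm_bounded fun j => ha j x

end HolderSeries

section EulerScheme

variable {ι : Type*} {F : Type*} [NormedAddCommGroup F] [NormedSpace ℝ F]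

/-- The value at the grid point of scale `r j` of the Euler polygon for `f' = M (·, f)`, `f 0 = 0`,
running from `0` to `z` through the grid points of scales `r 0`, ..., `r j`. -/
def eulerValue (M : (ι → ℝ) × F → (ι → ℝ) →L[ℝ] F) (r : ℕ → ℝ) (z : ι → ℝ) : ℕ → F
  | 0 => 0
  | j + 1 => eulerValue M r z j +
      M (gridPoint (r j) z, eulerValue M r z j) (gridPoint (r (j + 1)) z - gridPoint (r j) z)

/-- The slope prescribed by `M` at the `j`-th vertex of the Euler polygon. -/
def eulerSlope (M : (ι → ℝ) × F → (ι → ℝ) →L[ℝ] F) (r : ℕ → ℝ) (z : ι → ℝ) (j : ℕ) :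
    (ι → ℝ) →L[ℝ] F :=
  M (gridPoint (r j) z, eulerValue M r z j)

/-- The increments of `eulerSlope`, starting with the slope at the origin. -/
def slopeIncrement (M : (ι → ℝ) × F → (ι → ℝ) →L[ℝ] F) (r : ℕ → ℝ) (z : ι → ℝ) :
    ℕ → (ι → ℝ) →L[ℝ] F
  | 0 => eulerSlope M r z 0
  | j + 1 => eulerSlope M r z (j + 1) - eulerSlope M r z j

variable {M : (ι → ℝ) × F → (ι → ℝ) →L[ℝ] F} {r : ℕ → ℝ} {Λ : ℕ → ℕ}

lemma sum_slopeIncrement (z : ι → ℝ) (j : ℕ) :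
    ∑ m ∈ Finset.range (j + 1), slopeIncrement M r z m = eulerSlope M r z j := by
  induction j with
  | zero => simp [slopeIncrement]
  | succ j ih => rw [Finset.sum_range_succ, ih, slopeIncrement, add_sub_cancel]

lemma sum_slopeIncrement_apply_sub (z w : ι → ℝ) (j : ℕ) :
    ∑ m ∈ Finset.range (j + 1), slopeIncrement M r z m (w - gridPoint (r m) z) =
      eulerValue M r z j + eulerSlope M r z j (w - gridPoint (r j) z) := by
  induction j with
  | zero => simp [slopeIncrement, eulerValue]
  | succ j ih =>
    have hvalue : eulerValue M r z (j + 1) = eulerValue M r z j +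
        eulerSlope M r z j (gridPoint (r (j + 1)) z - gridPoint (r j) z) := rfl
    rw [Finset.sum_range_succ, ih, slopeIncrement, hvalue, _root_.sub_apply,
      ← sub_add_sub_cancel w (gridPoint (r (j + 1)) z) (gridPoint (r j) z), map_add]
    abel

namespace IsScaleSequence

lemma gridPoint_eq_of_succ (h : IsScaleSequence r Λ) {j : ℕ} {z w : ι → ℝ}
    (hzw : gridPoint (r (j + 1)) w = gridPoint (r (j + 1)) z) :
    gridPoint (r j) w = gridPoint (r j) z := by
  rw [h.eq_mul j]
  exact gridPoint_eq_of_gridPoint_eq (h.pos _) (Λ j) hzw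

lemma eulerValue_congr (h : IsScaleSequence r Λ) {z w : ι → ℝ} {j : ℕ}
    (hzw : gridPoint (r j) w = gridPoint (r j) z) : eulerValue M r w j = eulerValue M r z j := by
  induction j with
  | zero => rfl
  | succ j ih =>
    have hzw' := h.gridPoint_eq_of_succ hzw
    rw [eulerValue, eulerValue, ih hzw', hzw', hzw]

lemma eulerSlope_congr (h : IsScaleSequence r Λ) {z w : ι → ℝ} {j : ℕ}
    (hzw : gridPoint (r j) w = gridPoint (r j) z) : eulerSlope M r w j = eulerSlope M r z j := by
  rw [eulerSlope, eulerSlope, h.eulerValue_congr hzw, hzw]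

lemma slopeIncrement_congr (h : IsScaleSequence r Λ) {z w : ι → ℝ} {j : ℕ}
    (hzw : gridPoint (r j) w = gridPoint (r j) z) :
    slopeIncrement M r w j = slopeIncrement M r z j := by
  cases j with
  | zero => exact h.eulerSlope_congr hzw
  | succ j =>
    rw [slopeIncrement, slopeIncrement, h.eulerSlope_congr hzw,
      h.eulerSlope_congr (h.gridPoint_eq_of_succ hzw)]

end IsScaleSequence

variable [Fintype ι]

lemma norm_slopeIncrement_le {B : ℝ} (hB : ∀ x, ‖M x‖ ≤ B) (z : ι → ℝ) (j : ℕ) :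
    ‖slopeIncrement M r z j‖ ≤ 2 * B := by
  have hB0 : 0 ≤ B := (norm_nonneg _).trans (hB 0)
  cases j with
  | zero => exact (hB _).trans (by linarith)
  | succ j => exact (norm_sub_le_of_le (hB _) (hB _)).trans_eq (two_mul B).symm

/-- The change of slope at scale `r j`, cut off near the walls of the grid cubes so that the pieces
on adjacent cubes glue smoothly. -/
def eulerCorrection (M : (ι → ℝ) × F → (ι → ℝ) →L[ℝ] F) (r : ℕ → ℝ) (Λ : ℕ → ℕ) (j : ℕ)
    (z : ι → ℝ) : F :=
  gridCutoff (Λ j) (r j) z • slopeIncrement M r z j (z - gridPoint (r j) z)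

/-- The limit of the smoothed Euler scheme. -/
def eulerLimit (M : (ι → ℝ) × F → (ι → ℝ) →L[ℝ] F) (r : ℕ → ℝ) (Λ : ℕ → ℕ) (z : ι → ℝ) : F :=
  ∑' j, eulerCorrection M r Λ j z

lemma eulerCorrection_zero (j : ℕ) : eulerCorrection M r Λ j 0 = 0 := by
  simp [eulerCorrection, gridPoint_zero]

namespace IsScaleSequence

lemma norm_gridPoint_succ_sub_le (h : IsScaleSequence r Λ) (z : ι → ℝ) (j : ℕ) :
    ‖gridPoint (r (j + 1)) z - gridPoint (r j) z‖ ≤ 2 * r j := by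
  rw [← sub_sub_sub_cancel_left _ _ z]
  have hsucc := h.two_mul_succ_le j
  have hpos := h.pos (j + 1)
  exact (norm_sub_le_of_le (norm_sub_gridPoint_le (h.pos j) z)
    (norm_sub_gridPoint_le hpos z)).trans (by linarith)

lemma norm_slopeIncrement_succ_le (h : IsScaleSequence r Λ) {B : ℝ} (hB : ∀ x, ‖M x‖ ≤ B)
    {L : ℝ≥0} (hL : LipschitzWith L M) (z : ι → ℝ) (j : ℕ) :
    ‖slopeIncrement M r z (j + 1)‖ ≤ L * (2 * (1 + B)) * r j := by
  have hB0 : 0 ≤ B := (norm_nonneg _).trans (hB 0)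
  have hr := h.pos j
  have hstep := h.norm_gridPoint_succ_sub_le z j
  have hpoint : dist (gridPoint (r (j + 1)) z) (gridPoint (r j) z) ≤ 2 * (1 + B) * r j := by
    rw [dist_eq_norm]
    nlinarith
  have hvalue : dist (eulerValue M r z (j + 1)) (eulerValue M r z j) ≤ 2 * (1 + B) * r j := by
    rw [dist_eq_norm, eulerValue, add_sub_cancel_left]
    exact (ContinuousLinearMap.le_of_opNorm_le_of_le _ (hB _) hstep).trans (by nlinarith)
  rw [slopeIncrement, ← dist_eq_norm, mul_assoc]
  exact hL.dist_le_mul_of_le (max_le hpoint hvalue)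

lemma exists_norm_slopeIncrement_le (h : IsScaleSequence r Λ) {B : ℝ} (hB : ∀ x, ‖M x‖ ≤ B)
    {L : ℝ≥0} (hL : LipschitzWith L M) :
    ∃ C, 0 ≤ C ∧ ∀ z j, ‖slopeIncrement M r z j‖ ≤ C * (r j * Λ j) := by
  have hB0 : 0 ≤ B := (norm_nonneg _).trans (hB 0)
  have hΛ : ∀ j, (0 : ℝ) < Λ j := fun j => by linarith [h.two_le_cast j]
  have hr0 : 0 < r 0 * Λ 0 := mul_pos (h.pos 0) (hΛ 0)
  have hC : 0 ≤ L * (2 * (1 + B)) := by positivity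
  refine ⟨max (B / (r 0 * Λ 0)) (L * (2 * (1 + B))), le_max_of_le_right hC, fun z j => ?_⟩
  have hrj := h.pos j
  have hΛj := hΛ j
  cases j with
  | zero =>
    calc ‖slopeIncrement M r z 0‖ ≤ B / (r 0 * Λ 0) * (r 0 * Λ 0) := by
          rw [div_mul_cancel₀ _ hr0.ne']
          exact hB _
      _ ≤ _ := by gcongr; exact le_max_left _ _
  | succ j =>
    have hmono : (Λ j : ℝ) ≤ Λ (j + 1) := by exact_mod_cast h.monotone j.le_succ
    calc ‖slopeIncrement M r z (j + 1)‖ ≤ L * (2 * (1 + B)) * r j :=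
          h.norm_slopeIncrement_succ_le hB hL z j
      _ ≤ L * (2 * (1 + B)) * (r (j + 1) * Λ (j + 1)) := by
          rw [h.eq_mul j, mul_comm (Λ j : ℝ)]
          gcongr
      _ ≤ _ := by gcongr; exact le_max_right _ _

lemma eulerCorrection_eventuallyEq (h : IsScaleSequence r Λ) (z : ι → ℝ) (j : ℕ) :
    eulerCorrection M r Λ j =ᶠ[𝓝 z] fun w =>
      gridCutoff (Λ j) (r j) w • slopeIncrement M r z j (w - gridPoint (r j) z) := by
  by_cases hz : ∀ i, ∀ n : ℤ, z i ≠ n * r j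
  · filter_upwards [gridPoint_eventually_eq (h.pos j).ne' hz] with w hw
    rw [eulerCorrection, h.slopeIncrement_congr hw, hw]
  · push Not at hz
    obtain ⟨i, n, hn⟩ := hz
    filter_upwards [gridCutoff_eventuallyEq_zero (Λ := Λ j) (h.pos j).ne' hn] with w hw
    rw [eulerCorrection, hw, Pi.zero_apply, zero_smul, zero_smul]

private lemma contDiff_apply_sub_gridPoint (z : ι → ℝ) (j : ℕ) {m : ℕ} :
    ContDiff ℝ m fun w => slopeIncrement M r z j (w - gridPoint (r j) z) := by
  fun_prop

lemma contDiff_eulerCorrection (h : IsScaleSequence r Λ) (j : ℕ) {m : ℕ} :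
    ContDiff ℝ m (eulerCorrection M r Λ j) :=
  contDiff_iff_contDiffAt.2 fun z =>
    ((contDiff_gridCutoff.smul (contDiff_apply_sub_gridPoint z j)).contDiffAt).congr_of_eventuallyEq
      (h.eulerCorrection_eventuallyEq z j)

lemma exists_hasDerivBounds_eulerCorrection (h : IsScaleSequence r Λ) {B : ℝ}
    (hB : ∀ x, ‖M x‖ ≤ B) {L : ℝ≥0} (hL : LipschitzWith L M) (m : ℕ) :
    ∃ D, 0 ≤ D ∧ ∀ j z, HasDerivBounds m (D * (r j ^ 2 * Λ j)) (Real.pi / r j * Λ j)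
      (eulerCorrection M r Λ j) z := by
  obtain ⟨C, hC0, hC⟩ := h.exists_norm_slopeIncrement_le hB hL
  obtain ⟨A, hA⟩ := exists_forall_hasDerivBounds_gridCutoff ι m
  have hA0 : 0 ≤ A := (hA 1 1 le_rfl one_pos 0).nonneg
  refine ⟨2 ^ m * (A * C), by positivity, fun j z l hl => ?_⟩
  have hr := h.pos j
  have hΛ : (1 : ℝ) ≤ Λ j := by linarith [h.two_le_cast j]
  have hN : 0 ≤ Real.pi / r j * Λ j := by positivity
  have hrN : 1 ≤ r j * (Real.pi / r j * Λ j) := by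
    rw [← mul_assoc, mul_div_cancel₀ _ hr.ne']
    nlinarith [Real.pi_gt_three]
  have hbound := (hA _ _ hΛ hr z).smul hN contDiff_gridCutoff (contDiff_apply_sub_gridPoint z j)
    (HasDerivBounds.clm_comp_sub (slopeIncrement M r z j) hN (norm_sub_gridPoint_le hr z) hrN) l hl
  rw [((h.eulerCorrection_eventuallyEq z j).iteratedFDeriv ℝ l).eq_of_nhds]
  calc _ ≤ 2 ^ m * (A * (‖slopeIncrement M r z j‖ * r j)) * (Real.pi / r j * Λ j) ^ l := hbound
    _ ≤ 2 ^ m * (A * (C * (r j * Λ j) * r j)) * (Real.pi / r j * Λ j) ^ l := by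
        gcongr
        exact hC z j
    _ = 2 ^ m * (A * C) * (r j ^ 2 * Λ j) * (Real.pi / r j * Λ j) ^ l := by ring

lemma exists_fderiv_eulerCorrection_bounds (h : IsScaleSequence r Λ) {B : ℝ}
    (hB : ∀ x, ‖M x‖ ≤ B) {L : ℝ≥0} (hL : LipschitzWith L M) :
    ∃ D : ℝ≥0, ∀ j, (∀ z, ‖fderiv ℝ (eulerCorrection M r Λ j) z‖ ≤ D * (r j * Λ j ^ 3)) ∧
      LipschitzWith (D * Λ j ^ 3) (fderiv ℝ (eulerCorrection M r Λ j)) := by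
  obtain ⟨D, hD0, hD⟩ := h.exists_hasDerivBounds_eulerCorrection hB hL 2
  refine ⟨⟨D * Real.pi ^ 2, by positivity⟩, fun j => ?_⟩
  have hr := h.pos j
  have hΛ : (1 : ℝ) ≤ Λ j := by linarith [h.two_le_cast j]
  have hpi : 1 ≤ Real.pi := by linarith [Real.pi_gt_three]
  constructor
  · intro z
    have hbound := hD j z 1 one_le_two
    rw [norm_iteratedFDeriv_one] at hbound
    calc ‖fderiv ℝ (eulerCorrection M r Λ j) z‖
        ≤ D * (r j ^ 2 * Λ j) * (Real.pi / r j * Λ j) ^ 1 := hbound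
      _ = D * Real.pi ^ 1 * (r j * (Λ j : ℝ) ^ 2) := by field_simp
      _ ≤ D * Real.pi ^ 2 * (r j * (Λ j : ℝ) ^ 3) := by gcongr <;> first | assumption | norm_num
  · have hdiff : Differentiable ℝ (fderiv ℝ (eulerCorrection M r Λ j)) :=
      ((h.contDiff_eulerCorrection j (m := 2)).fderiv_right (m := 1) (by norm_num)).differentiable
        one_ne_zero
    refine lipschitzWith_of_nnnorm_fderiv_le hdiff fun z => ?_
    have hbound := hD j z 2 le_rfl
    rw [← norm_iteratedFDeriv_fderiv, norm_iteratedFDeriv_one] at hbound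
    rw [← NNReal.coe_le_coe]
    calc ‖fderiv ℝ (fderiv ℝ (eulerCorrection M r Λ j)) z‖
        ≤ D * (r j ^ 2 * Λ j) * (Real.pi / r j * Λ j) ^ 2 := hbound
      _ = D * Real.pi ^ 2 * (Λ j : ℝ) ^ 3 := by field_simp

section Limit

variable {B : ℝ} {L : ℝ≥0}

lemma differentiable_eulerCorrection (h : IsScaleSequence r Λ) (j : ℕ) :
    Differentiable ℝ (eulerCorrection M r Λ j) :=
  (h.contDiff_eulerCorrection j (m := 1)).differentiable one_ne_zero

lemma summable_eulerCorrection_zero : Summable fun j => eulerCorrection M r Λ j 0 := by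
  simpa only [eulerCorrection_zero] using summable_zero

lemma exists_summable_norm_fderiv_eulerCorrection_le (h : IsScaleSequence r Λ)
    (hsum : Summable fun j => r j * (Λ j : ℝ) ^ 3) (hB : ∀ x, ‖M x‖ ≤ B)
    (hL : LipschitzWith L M) :
    ∃ u, Summable u ∧ ∀ j z, ‖fderiv ℝ (eulerCorrection M r Λ j) z‖ ≤ u j := by
  obtain ⟨D, hD⟩ := h.exists_fderiv_eulerCorrection_bounds hB hL
  exact ⟨_, hsum.mul_left (D : ℝ), fun j => (hD j).1⟩

variable [CompleteSpace F]

lemma hasSum_eulerCorrection (h : IsScaleSequence r Λ)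
    (hsum : Summable fun j => r j * (Λ j : ℝ) ^ 3) (hB : ∀ x, ‖M x‖ ≤ B)
    (hL : LipschitzWith L M) (z : ι → ℝ) :
    HasSum (fun j => eulerCorrection M r Λ j z) (eulerLimit M r Λ z) := by
  obtain ⟨u, hu, hle⟩ := h.exists_summable_norm_fderiv_eulerCorrection_le hsum hB hL
  exact (summable_of_summable_hasFDerivAt hu
    (fun j w => (h.differentiable_eulerCorrection j w).hasFDerivAt) hle
    summable_eulerCorrection_zero z).hasSum

lemma differentiable_eulerLimit (h : IsScaleSequence r Λ)
    (hsum : Summable fun j => r j * (Λ j : ℝ) ^ 3) (hB : ∀ x, ‖M x‖ ≤ B)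
    (hL : LipschitzWith L M) : Differentiable ℝ (eulerLimit M r Λ) := by
  obtain ⟨u, hu, hle⟩ := h.exists_summable_norm_fderiv_eulerCorrection_le hsum hB hL
  exact differentiable_tsum hu
    (fun j w => (h.differentiable_eulerCorrection j w).hasFDerivAt) hle

lemma hasSum_fderiv_eulerCorrection (h : IsScaleSequence r Λ)
    (hsum : Summable fun j => r j * (Λ j : ℝ) ^ 3) (hB : ∀ x, ‖M x‖ ≤ B)
    (hL : LipschitzWith L M) (z : ι → ℝ) :
    HasSum (fun j => fderiv ℝ (eulerCorrection M r Λ j) z) (fderiv ℝ (eulerLimit M r Λ) z) := by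
  obtain ⟨u, hu, hle⟩ := h.exists_summable_norm_fderiv_eulerCorrection_le hsum hB hL
  have hfderiv : fderiv ℝ (eulerLimit M r Λ) z = ∑' j, fderiv ℝ (eulerCorrection M r Λ j) z :=
    fderiv_tsum_apply hu h.differentiable_eulerCorrection hle summable_eulerCorrection_zero z
  rw [hfderiv]
  exact (hu.of_norm_bounded fun j => hle j z).hasSum

lemma memHolder_fderiv_eulerLimit (h : IsScaleSequence r Λ)
    (hsum : Summable fun j => r j * (Λ j : ℝ) ^ 3) (hB : ∀ x, ‖M x‖ ≤ B)
    (hL : LipschitzWith L M) {α : ℝ≥0} (hα : α ≤ 1)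
    (hsum_α : Summable fun j => r j ^ (1 - α : ℝ) * (Λ j : ℝ) ^ 3) :
    MemHolder α (fderiv ℝ (eulerLimit M r Λ)) := by
  obtain ⟨D, hD⟩ := h.exists_fderiv_eulerCorrection_bounds hB hL
  have hr : ∀ j, ((r j).toNNReal : ℝ) = r j := fun j => Real.coe_toNNReal _ (h.pos j).le
  refine ⟨_, holderWith_fderiv_tsum hα (a := fun j => D * ((r j).toNNReal * Λ j ^ 3))
    (K := fun j => D * Λ j ^ 3) h.differentiable_eulerCorrection
    (fun j z => by simpa [hr] using (hD j).1 z) (fun j => (hD j).2) ?_ ?_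
    summable_eulerCorrection_zero⟩ <;> rw [← NNReal.summable_coe]
  · simpa [hr] using hsum.mul_left (D : ℝ)
  · refine (hsum_α.mul_left (2 ^ (1 - α : ℝ) * D : ℝ)).congr fun j => ?_
    have hrj := (h.pos j).le
    have hDΛ : 0 ≤ (D : ℝ) * (Λ j : ℝ) ^ 3 := by positivity
    have hsplit : (2 * (D * (r j * (Λ j : ℝ) ^ 3))) ^ (1 - α : ℝ) =
        2 ^ (1 - α : ℝ) * r j ^ (1 - α : ℝ) * (D * (Λ j : ℝ) ^ 3) ^ (1 - α : ℝ) := by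
      rw [← Real.mul_rpow zero_le_two hrj, ← Real.mul_rpow (by positivity) hDΛ]
      ring_nf
    have hjoin : (D * (Λ j : ℝ) ^ 3) ^ (1 - α : ℝ) * (D * (Λ j : ℝ) ^ 3) ^ (α : ℝ) =
        D * (Λ j : ℝ) ^ 3 := by
      rw [← Real.rpow_add' hDΛ (by simp), sub_add_cancel, Real.rpow_one]
    push_cast [NNReal.coe_sub hα, hr]
    rw [hsplit, mul_assoc _ _ (_ ^ (α : ℝ)), hjoin]
    ring

lemma contDiff_eulerLimit (h : IsScaleSequence r Λ)
    (hsum : Summable fun j => r j * (Λ j : ℝ) ^ 3) (hB : ∀ x, ‖M x‖ ≤ B)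
    (hL : LipschitzWith L M) {α : ℝ≥0} (hα0 : 0 < α) (hα : α ≤ 1)
    (hsum_α : Summable fun j => r j ^ (1 - α : ℝ) * (Λ j : ℝ) ^ 3) :
    ContDiff ℝ 1 (eulerLimit M r Λ) := by
  obtain ⟨C, hC⟩ := h.memHolder_fderiv_eulerLimit hsum hB hL hα hsum_α
  exact contDiff_one_iff_fderiv.2 ⟨h.differentiable_eulerLimit hsum hB hL, hC.continuous hα0⟩

end Limit

section Tangency

variable {B : ℝ} {L : ℝ≥0} {z : ι → ℝ}

lemma norm_le_of_mem_fatCantorSet (h : IsScaleSequence r Λ) (hz : ∀ i, z i ∈ fatCantorSet r Λ) :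
    ‖z‖ ≤ r 0 :=
  (pi_norm_le_iff_of_nonneg (h.pos 0).le).2 fun i =>
    (Real.norm_of_nonneg (hz i).1.1).trans_le (hz i).1.2.le

lemma eulerCorrection_eventuallyEq_of_mem_fatCantorSet (h : IsScaleSequence r Λ)
    (hz : ∀ i, z i ∈ fatCantorSet r Λ) (j : ℕ) :
    eulerCorrection M r Λ j =ᶠ[𝓝 z] fun w => slopeIncrement M r z j (w - gridPoint (r j) z) := by
  have hΛ : (0 : ℝ) < Λ j := by linarith [h.two_le_cast j]
  filter_upwards [h.eulerCorrection_eventuallyEq (M := M) z j,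
    gridCutoff_eventuallyEq_one hΛ (h.pos j)
      fun i => mem_iInter.1 (hz i).2 j] with w hw hone
  rw [hw, hone, Pi.one_apply, one_smul]

lemma eulerCorrection_of_mem_fatCantorSet (h : IsScaleSequence r Λ)
    (hz : ∀ i, z i ∈ fatCantorSet r Λ) (j : ℕ) :
    eulerCorrection M r Λ j z = slopeIncrement M r z j (z - gridPoint (r j) z) :=
  (h.eulerCorrection_eventuallyEq_of_mem_fatCantorSet hz j).eq_of_nhds

lemma fderiv_eulerCorrection_of_mem_fatCantorSet (h : IsScaleSequence r Λ)
    (hz : ∀ i, z i ∈ fatCantorSet r Λ) (j : ℕ) :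
    fderiv ℝ (eulerCorrection M r Λ j) z = slopeIncrement M r z j := by
  rw [(h.eulerCorrection_eventuallyEq_of_mem_fatCantorSet hz j).fderiv_eq]
  exact ((slopeIncrement M r z j).hasFDerivAt.comp z ((hasFDerivAt_id z).sub_const _)).fderiv

lemma norm_eulerCorrection_le (h : IsScaleSequence r Λ) (hB : ∀ x, ‖M x‖ ≤ B)
    (hz : ∀ i, z i ∈ fatCantorSet r Λ) (j : ℕ) :
    ‖eulerCorrection M r Λ j z‖ ≤ 2 * B * (r 0 * (1 / 2) ^ j) := by
  rw [h.eulerCorrection_of_mem_fatCantorSet hz]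
  exact ContinuousLinearMap.le_of_opNorm_le_of_le _ (norm_slopeIncrement_le hB z j)
    ((norm_sub_gridPoint_le (h.pos j) z).trans (h.le_geometric j))

lemma norm_eulerLimit_le (h : IsScaleSequence r Λ) (hB : ∀ x, ‖M x‖ ≤ B)
    (hz : ∀ i, z i ∈ fatCantorSet r Λ) : ‖eulerLimit M r Λ z‖ ≤ 4 * B * r 0 := by
  have hgeom : HasSum (fun j : ℕ => 2 * B * (r 0 * (1 / 2 : ℝ) ^ j)) (2 * B * (r 0 * 2)) :=
    (hasSum_geometric_two.mul_left (r 0)).mul_left (2 * B)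
  exact (tsum_of_norm_bounded hgeom (h.norm_eulerCorrection_le hB hz)).trans_eq (by ring)

variable [CompleteSpace F]

lemma tendsto_eulerValue (h : IsScaleSequence r Λ)
    (hsum : Summable fun j => r j * (Λ j : ℝ) ^ 3) (hB : ∀ x, ‖M x‖ ≤ B)
    (hL : LipschitzWith L M) (hz : ∀ i, z i ∈ fatCantorSet r Λ) :
    Tendsto (eulerValue M r z) atTop (𝓝 (eulerLimit M r Λ z)) := by
  have hpartial : Tendsto
      (fun j => eulerValue M r z j + eulerSlope M r z j (z - gridPoint (r j) z)) atTop
      (𝓝 (eulerLimit M r Λ z)) := by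
    refine ((h.hasSum_eulerCorrection hsum hB hL z).tendsto_sum_nat.comp
      (tendsto_add_atTop_nat 1)).congr fun j => ?_
    simp only [Function.comp_apply, h.eulerCorrection_of_mem_fatCantorSet hz]
    exact sum_slopeIncrement_apply_sub z z j
  have hremainder : Tendsto (fun j => eulerSlope M r z j (z - gridPoint (r j) z)) atTop (𝓝 0) :=
    squeeze_zero_norm (fun j => ContinuousLinearMap.le_of_opNorm_le_of_le _ (hB _)
      (norm_sub_gridPoint_le (h.pos j) z)) (by simpa using h.tendsto_zero.const_mul B)
  simpa using hpartial.sub hremainder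

lemma fderiv_eulerLimit (h : IsScaleSequence r Λ)
    (hsum : Summable fun j => r j * (Λ j : ℝ) ^ 3) (hB : ∀ x, ‖M x‖ ≤ B)
    (hL : LipschitzWith L M) (hz : ∀ i, z i ∈ fatCantorSet r Λ) :
    fderiv ℝ (eulerLimit M r Λ) z = M (z, eulerLimit M r Λ z) := by
  have hgrid : Tendsto (fun j => gridPoint (r j) z) atTop (𝓝 z) :=
    tendsto_iff_norm_sub_tendsto_zero.2 <| squeeze_zero (fun _ => norm_nonneg _)
      (fun j => (norm_sub_rev _ _).trans_le (norm_sub_gridPoint_le (h.pos j) z)) h.tendsto_zero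
  have hslope : Tendsto (eulerSlope M r z) atTop (𝓝 (M (z, eulerLimit M r Λ z))) :=
    (hL.continuous.tendsto _).comp
      (hgrid.prodMk_nhds (h.tendsto_eulerValue hsum hB hL hz))
  refine tendsto_nhds_unique (((h.hasSum_fderiv_eulerCorrection hsum hB hL z).tendsto_sum_nat.comp
    (tendsto_add_atTop_nat 1)).congr fun j => ?_) hslope
  simp only [Function.comp_apply, h.fderiv_eulerCorrection_of_mem_fatCantorSet hz,
    sum_slopeIncrement]

end Tangency

end IsScaleSequence

theorem exists_contDiff_fderiv_eq_on_pos_volume [CompleteSpace F] {B : ℝ} (hB : ∀ x, ‖M x‖ ≤ B)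
    {L : ℝ≥0} (hL : LipschitzWith L M) {ρ : ℝ} (hρ : 0 < ρ) :
    ∃ (f : (ι → ℝ) → F) (A : Set (ι → ℝ)), ContDiff ℝ 1 f ∧
      (∀ α : ℝ≥0, α < 1 → MemHolder α (fderiv ℝ f)) ∧ 0 < volume A ∧
      ∀ z ∈ A, ‖z‖ ≤ ρ ∧ ‖f z‖ ≤ ρ ∧ fderiv ℝ f z = M (z, f z) := by
  have hB0 : 0 ≤ B := (norm_nonneg _).trans (hB 0)
  obtain ⟨r, Λ, h, hr, hsum, s, hs, hsum_s⟩ :=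
    exists_isScaleSequence (div_pos hρ (by positivity : 0 < 1 + 4 * B))
  rw [le_div_iff₀ (by positivity)] at hr
  have hr0 := h.pos 0
  have hBr : 0 ≤ B * r 0 := by positivity
  have hsum_one : Summable fun j => r j * (Λ j : ℝ) ^ 3 := by simpa using hsum 1 one_pos 3
  have hhalf : (1 / 2 : ℝ≥0) < 1 := NNReal.half_lt_self one_ne_zero
  refine ⟨eulerLimit M r Λ, univ.pi fun _ => fatCantorSet r Λ,
    h.contDiff_eulerLimit hsum_one hB hL (by positivity) hhalf.le (hsum _ (sub_pos.2 hhalf) 3),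
    fun α hα => h.memHolder_fderiv_eulerLimit hsum_one hB hL hα.le
      (hsum _ (sub_pos.2 hα) 3), ?_, fun z hz => ?_⟩
  · rw [volume_pi_pi, pos_iff_ne_zero, Finset.prod_ne_zero_iff]
    exact fun _ _ => (h.volume_fatCantorSet_pos hs hsum_s).ne'
  · rw [mem_univ_pi] at hz
    exact ⟨(h.norm_le_of_mem_fatCantorSet hz).trans (by linarith),
      (h.norm_eulerLimit_le hB hz).trans (by linarith), h.fderiv_eulerLimit hsum_one hB hL hz⟩

end EulerScheme

section LinearSpaces

variable {E F G : Type*} [NormedAddCommGroup E] [NormedSpace ℝ E]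
  [NormedAddCommGroup F] [NormedSpace ℝ F] [NormedAddCommGroup G] [NormedSpace ℝ G]

lemma fderiv_const_add_comp_symm_sub (f : G → F) (e : G ≃L[ℝ] E) (a : E) (b : F) :
    fderiv ℝ (fun z => b + f (e.symm (z - a))) =
      fun z => (fderiv ℝ f (e.symm (z - a))).comp (e.symm : E →L[ℝ] G) := by
  funext z
  rw [fderiv_const_add, fderiv_comp_sub (f := fun z => f (e.symm z)),
    ← Function.comp_def, e.symm.comp_right_fderiv]

lemma memHolder_comp_precomp {X Y : Type*} [PseudoEMetricSpace X] [PseudoEMetricSpace Y]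
    {α K : ℝ≥0} {g : Y → E →L[ℝ] F} (hg : MemHolder α g) {φ : X → Y} (hφ : LipschitzWith K φ)
    (A : G →L[ℝ] E) :
    MemHolder α fun x => (g (φ x)).comp A := by
  obtain ⟨C, hC⟩ := hg
  have h := ((ContinuousLinearMap.precomp F A).lipschitz.holderWith.comp hC).comp hφ.holderWith
  rw [one_mul, mul_one] at h
  exact h.memHolder

theorem exists_contDiff_fderiv_eq_of_mem_nhds {ι : Type*} [Fintype ι] [CompleteSpace F]
    (e : (ι → ℝ) ≃L[ℝ] E) {M : E × F → E →L[ℝ] F} {B : ℝ} (hB : ∀ x, ‖M x‖ ≤ B)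
    {L : ℝ≥0} (hL : LipschitzWith L M) {p : E × F} {O : Set (E × F)} (hO : O ∈ 𝓝 p) :
    ∃ (f : E → F) (A : Set (ι → ℝ)), ContDiff ℝ 1 f ∧
      (∀ α : ℝ≥0, α < 1 → MemHolder α (fderiv ℝ f)) ∧ 0 < volume A ∧
      ∀ u ∈ A, (p.1 + e u, f (p.1 + e u)) ∈ O ∧
        fderiv ℝ f (p.1 + e u) = M (p.1 + e u, f (p.1 + e u)) := by
  let toCoord : (ι → ℝ) × F → E × F := fun q => p + (e : (ι → ℝ) →L[ℝ] E).prodMap (.id ℝ F) q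
  have htoCoord : LipschitzWith _ toCoord :=
    (LipschitzWith.const p).add (ContinuousLinearMap.lipschitz _)
  have hO0 : toCoord ⁻¹' O ∈ 𝓝 0 :=
    htoCoord.continuous.continuousAt.preimage_mem_nhds
      (by simpa only [toCoord, map_zero, add_zero] using hO)
  obtain ⟨ρ, hρ, hball⟩ := nhds_basis_closedBall.mem_iff.1 hO0
  obtain ⟨f, A, hf, hHolder, hA, hfA⟩ := exists_contDiff_fderiv_eq_on_pos_volume
    (M := fun q => (M (toCoord q)).comp (e : (ι → ℝ) →L[ℝ] E))
    (fun q => (ContinuousLinearMap.opNorm_comp_le _ _).trans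
      (mul_le_mul_of_nonneg_right (hB _) (norm_nonneg _)))
    ((ContinuousLinearMap.precomp F (e : (ι → ℝ) →L[ℝ] E)).lipschitz.comp (hL.comp htoCoord)) hρ
  refine ⟨fun z => p.2 + f (e.symm (z - p.1)), A, by fun_prop, fun α hα => ?_, hA, fun u hu => ?_⟩
  · rw [fderiv_const_add_comp_symm_sub]
    exact memHolder_comp_precomp (hHolder α hα) (e.symm.lipschitz.comp
      (LipschitzWith.id.sub (LipschitzWith.const p.1))) _
  · obtain ⟨hu_le, hfu_le, hfu⟩ := hfA u hu
    have hmem : toCoord (u, f u) ∈ O :=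
      hball (mem_closedBall_zero_iff.2 (max_le hu_le hfu_le))
    rw [fderiv_const_add_comp_symm_sub]
    simp only [add_sub_cancel_left, e.symm_apply_apply, hfu]
    exact ⟨hmem, by ext w; exact congrArg (M _) (e.apply_symm_apply w)⟩

end LinearSpaces

section Cutoff

variable {E F : Type*} [NormedAddCommGroup E] [NormedSpace ℝ E] [FiniteDimensional ℝ E]
  [NormedAddCommGroup F] [NormedSpace ℝ F]

lemma exists_contDiff_hasCompactSupport_eventuallyEq {m : ℕ∞} (hm : m ≠ ⊤) {f : E → F} {x₀ : E}
    (hf : ContDiffAt ℝ m f x₀) :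
    ∃ g : E → F, ContDiff ℝ m g ∧ HasCompactSupport g ∧ g =ᶠ[𝓝 x₀] f := by
  obtain ⟨R, hR, hball⟩ :=
    Metric.eventually_nhds_iff_ball.1 (hf.eventually (by exact_mod_cast hm))
  let χ : ContDiffBump x₀ := ⟨R / 3, R / 2, by positivity, by linarith⟩
  refine ⟨fun x => χ x • f x, ?_, χ.hasCompactSupport.smul_right, ?_⟩
  · have hinside : ContDiffOn ℝ m (fun x => χ x • f x) (ball x₀ R) := fun x hx =>
      (χ.contDiffAt.smul (hball x hx)).contDiffWithinAt
    have houtside : ContDiffOn ℝ m (fun x => χ x • f x) (tsupport χ)ᶜ :=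
      contDiffOn_const.congr fun x hx => by
        rw [image_eq_zero_of_notMem_tsupport hx, zero_smul]
    refine contDiff_of_contDiffOn_union_of_isOpen hinside houtside ?_ isOpen_ball
      (isClosed_tsupport χ).isOpen_compl
    rw [← compl_subset_iff_union, compl_subset_compl, χ.tsupport_eq]
    exact closedBall_subset_ball (half_lt_self hR)
  · filter_upwards [χ.eventuallyEq_one] with x hx
    rw [hx, Pi.one_apply, one_smul]

lemma exists_lipschitzWith_norm_le_eventuallyEq {f : E → F} {x₀ : E} (hf : ContDiffAt ℝ 1 f x₀) :
    ∃ (g : E → F) (L : ℝ≥0) (B : ℝ), LipschitzWith L g ∧ (∀ x, ‖g x‖ ≤ B) ∧ g =ᶠ[𝓝 x₀] f := by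
  obtain ⟨g, hg, hsupp, hgf⟩ :=
    exists_contDiff_hasCompactSupport_eventuallyEq (m := 1) ENat.one_ne_top hf
  obtain ⟨L, hL⟩ := ContDiff.lipschitzWith_of_hasCompactSupport hsupp hg one_ne_zero
  obtain ⟨B, hB⟩ := hg.continuous.bounded_above_of_compact_support hsupp
  exact ⟨g, L, B, hL, hB, hgf⟩

end Cutoff

lemma hausdorffMeasure_pos_of_subset_image {ι X : Type*} [Fintype ι] [EMetricSpace X]
    [MeasurableSpace X] [BorelSpace X] {P : X → ι → ℝ} {K : ℝ≥0} (hP : LipschitzWith K P)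
    {A : Set (ι → ℝ)} (hA : 0 < volume A) {S : Set X} (hAS : A ⊆ P '' S) :
    0 < μH[(Fintype.card ι : ℝ)] S := by
  rw [← hausdorffMeasure_pi_real] at hA
  have hle : 0 < (K : ℝ≥0∞) ^ (Fintype.card ι : ℝ) * μH[(Fintype.card ι : ℝ)] S :=
    hA.trans_le <| (measure_mono hAS).trans <|
      hP.hausdorffMeasure_image_le (Nat.cast_nonneg _) S
  exact pos_of_mul_pos_right hle zero_le

section TangentCone

variable {E F : Type*} [NormedAddCommGroup E] [NormedSpace ℝ E] [NormedAddCommGroup F]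
  [NormedSpace ℝ F]

lemma tangentConeAt_subset_ker {g : E → F} {g' : E →L[ℝ] F} {s : Set E} {x : E}
    (hg : HasFDerivAt g g' x) (hs : ∀ y ∈ s, g y = g x) :
    tangentConeAt ℝ s x ⊆ (g'.ker : Set E) := by
  intro y hy
  have himage : g '' s ⊆ {g x} := image_subset_iff.2 hs
  have hnotAcc : ¬AccPt (g x) (𝓟 {g x}) := by
    rw [accPt_principal_iff_nhdsWithin, sdiff_self, nhdsWithin_empty]
    exact not_neBot.2 rfl
  exact tangentConeAt_subset_zero hnotAcc
    (tangentConeAt_mono himage (hg.hasFDerivWithinAt.mapsTo_tangent_cone hy))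

lemma range_subset_tangentConeAt_range {g : E → F} {g' : E →L[ℝ] F} {x : E}
    (hg : HasFDerivAt g g' x) : range g' ⊆ tangentConeAt ℝ (range g) (g x) := by
  rintro _ ⟨y, rfl⟩
  rw [← image_univ]
  refine hg.hasFDerivWithinAt.mapsTo_tangent_cone ?_
  rw [tangentConeAt_univ]
  exact mem_univ y

end TangentCone

section GraphMap

variable {W : Submodule ℝ (Euc n)}

lemma orthogonalProjectionOnto_graphMap (f : W → Wᗮ) (z : W) :
    W.orthogonalProjectionOnto (graphMap W f z) = z := by
  rw [graphMap, map_add, Submodule.orthogonalProjectionOnto_mem_subspace_eq_self,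
    Submodule.orthogonalProjectionOnto_apply_of_mem_orthogonal (f z).2, add_zero]

lemma orthogonalProjectionOnto_orthogonal_graphMap (f : W → Wᗮ) (z : W) :
    Wᗮ.orthogonalProjectionOnto (graphMap W f z) = f z := by
  rw [graphMap, map_add, Submodule.orthogonalProjectionOnto_mem_subspace_eq_self,
    Submodule.orthogonalProjectionOnto_orthogonal_apply_eq_zero z.2, zero_add]

lemma orthogonalProjectionOnto_add_orthogonal (W : Submodule ℝ (Euc n)) (y : Euc n) :
    (W.orthogonalProjectionOnto y : Euc n) + (Wᗮ.orthogonalProjectionOnto y : Euc n) = y := by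
  simpa only [Submodule.starProjection_apply] using W.starProjection_add_starProjection_orthogonal y

lemma mem_range_graphMap {f : W → Wᗮ} {y : Euc n} :
    y ∈ range (graphMap W f) ↔
      Wᗮ.orthogonalProjectionOnto y = f (W.orthogonalProjectionOnto y) := by
  constructor
  · rintro ⟨z, rfl⟩
    rw [orthogonalProjectionOnto_graphMap, orthogonalProjectionOnto_orthogonal_graphMap]
  · intro hy
    refine ⟨W.orthogonalProjectionOnto y, ?_⟩
    rw [graphMap, ← hy, orthogonalProjectionOnto_add_orthogonal]

lemma hasFDerivAt_graphMap {f : W → Wᗮ} {f' : W →L[ℝ] Wᗮ} {z : W} (hf : HasFDerivAt f f' z) :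
    HasFDerivAt (graphMap W f) (W.subtypeL + Wᗮ.subtypeL ∘L f') z :=
  W.subtypeL.hasFDerivAt.add (Wᗮ.subtypeL.hasFDerivAt.comp z hf)

lemma tangentConeAt_range_graphMap {f : W → Wᗮ} {f' : W →L[ℝ] Wᗮ} {z : W}
    (hf : HasFDerivAt f f' z) :
    tangentConeAt ℝ (range (graphMap W f)) (graphMap W f z) = range (graphMap W f') := by
  refine Subset.antisymm (fun y hy => ?_) ?_
  · have hdefining : HasFDerivAt
        (fun y => Wᗮ.orthogonalProjectionOnto y - f (W.orthogonalProjectionOnto y))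
        (Wᗮ.orthogonalProjectionOnto - f' ∘L W.orthogonalProjectionOnto) (graphMap W f z) := by
      refine Wᗮ.orthogonalProjectionOnto.hasFDerivAt.sub
        (HasFDerivAt.comp _ ?_ W.orthogonalProjectionOnto.hasFDerivAt)
      rwa [orthogonalProjectionOnto_graphMap]
    have hker := tangentConeAt_subset_ker hdefining (s := range (graphMap W f)) ?_ hy
    · exact mem_range_graphMap.2 (sub_eq_zero.1 hker)
    · intro y hy
      rw [mem_range_graphMap.1 hy, mem_range_graphMap.1 (mem_range_self z), sub_self, sub_self]
  · exact range_subset_tangentConeAt_range (hasFDerivAt_graphMap hf)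

lemma isC1AlphaSubmanifold_range_graphMap_inter {α : ℝ} {f : W → Wᗮ} (hf : ContDiff ℝ 1 f)
    (hHolder : MemHolder α.toNNReal (fderiv ℝ f)) {Ω : Set (Euc n)} (hΩ : IsOpen Ω) :
    IsC1AlphaSubmanifold (finrank ℝ W) α (range (graphMap W f) ∩ Ω) := by
  obtain ⟨C, hC⟩ := hHolder
  intro x hx
  refine ⟨W, univ, f, Ω, rfl, isOpen_univ, hf.contDiffOn, ⟨C, hC.holderOnWith univ⟩, hΩ, hx.2, ?_⟩
  rw [inter_assoc, inter_self, image_univ]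

lemma graphMap_mem_tangencySet {f : W → Wᗮ} {f' : W →L[ℝ] Wᗮ} {z : W} (hf : HasFDerivAt f f' z)
    {Ω : Set (Euc n)} (hΩ : Ω ∈ 𝓝 (graphMap W f z)) {V : Euc n → Submodule ℝ (Euc n)}
    (hV : (V (graphMap W f z) : Set (Euc n)) = range (graphMap W f')) :
    graphMap W f z ∈ tangencySet (range (graphMap W f) ∩ Ω) V := by
  refine ⟨⟨mem_range_self z, mem_of_mem_nhds hΩ⟩, ?_⟩
  rw [tangentConeAt_inter_nhds hΩ, tangentConeAt_range_graphMap hf, hV]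

lemma hausdorffMeasure_pos_of_graphMap_mem {ι : Type*} [Fintype ι] (e : (ι → ℝ) ≃L[ℝ] W)
    {f : W → Wᗮ} {z₀ : W} {A : Set (ι → ℝ)} (hA : 0 < volume A) {S : Set (Euc n)}
    (hS : ∀ u ∈ A, graphMap W f (z₀ + e u) ∈ S) : 0 < μH[(Fintype.card ι : ℝ)] S := by
  have hcoord : LipschitzWith _ fun y => e.symm (W.orthogonalProjectionOnto y - z₀) :=
    e.symm.lipschitz.comp
      (W.orthogonalProjectionOnto.lipschitz.sub (LipschitzWith.const z₀))
  refine hausdorffMeasure_pos_of_subset_image hcoord hA fun u hu => ⟨_, hS u hu, ?_⟩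
  simp only [orthogonalProjectionOnto_graphMap, add_sub_cancel_left, e.symm_apply_apply]

end GraphMap

section PlaneFieldAsGraph

lemma IsC1PlaneField.exists_contDiffAt_frame {k : ℕ} {Ω : Set (Euc n)}
    {V : Euc n → Submodule ℝ (Euc n)} (hV : IsC1PlaneField k Ω V) {x₀ : Euc n} (hx₀ : x₀ ∈ Ω) :
    ∃ T : Euc n → (Fin k → ℝ) →L[ℝ] Euc n, ContDiffAt ℝ 1 T x₀ ∧
      ∀ᶠ x in 𝓝 x₀, (V x : Set (Euc n)) = range (T x) := by
  obtain ⟨U, hU, hx₀U, -, X, hX, hspan⟩ := hV.2.2 x₀ hx₀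
  refine ⟨fun x => (Fintype.linearCombination ℝ fun i => X i x).toContinuousLinearMap, ?_, ?_⟩
  · refine (contDiffOn_clm_apply.2 fun u => ?_).contDiffAt (hU.mem_nhds hx₀U)
    simpa [Fintype.linearCombination_apply] using
      ContDiffOn.sum fun i _ => contDiffOn_const.smul (hX i)
  · filter_upwards [hU.mem_nhds hx₀U] with x hx
    rw [hspan x hx, ← Fintype.range_linearCombination ℝ, LinearMap.coe_range]
    rfl

variable {W : Submodule ℝ (Euc n)} {G : Type*} [NormedAddCommGroup G] [NormedSpace ℝ G]

lemma range_eq_range_graphMap {T : G →L[ℝ] Euc n} {e : G ≃L[ℝ] W}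
    (he : W.orthogonalProjectionOnto ∘L T = e) :
    range T =
      range (graphMap W ((Wᗮ.orthogonalProjectionOnto ∘L T) ∘L (e.symm : W →L[ℝ] G))) := by
  rw [← e.surjective.range_comp]
  congr 1
  funext u
  have hu : W.orthogonalProjectionOnto (T u) = e u := congrArg (· u) he
  rw [Function.comp_apply, graphMap, ContinuousLinearMap.comp_apply, ContinuousLinearEquiv.coe_coe,
    e.symm_apply_apply, ← hu, ContinuousLinearMap.comp_apply,
    orthogonalProjectionOnto_add_orthogonal]

lemma exists_contDiffAt_range_eq_range_graphMap [CompleteSpace G]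
    {T : Euc n → G →L[ℝ] Euc n} {x₀ : Euc n} (hT : ContDiffAt ℝ 1 T x₀) {e : G ≃L[ℝ] W}
    (he : W.orthogonalProjectionOnto ∘L T x₀ = e) :
    ∃ N : Euc n → W →L[ℝ] Wᗮ, ContDiffAt ℝ 1 N x₀ ∧
      ∀ᶠ x in 𝓝 x₀, range (T x) = range (graphMap W (N x)) := by
  have hproj : ContDiffAt ℝ 1 (fun x => W.orthogonalProjectionOnto ∘L T x) x₀ :=
    contDiffAt_const.clm_comp hT
  have hinverse : ContDiffAt ℝ 1 (fun x => (W.orthogonalProjectionOnto ∘L T x).inverse) x₀ :=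
    ContDiffAt.comp x₀ (g := ContinuousLinearMap.inverse)
      (by rw [he]; exact contDiffAt_map_inverse e) hproj
  have hequiv : ∀ᶠ A in 𝓝 (W.orthogonalProjectionOnto ∘L T x₀), ∃ e' : G ≃L[ℝ] W, ↑e' = A := by
    rw [he]
    exact e.nhds
  refine ⟨fun x => (Wᗮ.orthogonalProjectionOnto ∘L T x) ∘L
    (W.orthogonalProjectionOnto ∘L T x).inverse,
    (contDiffAt_const.clm_comp hT).clm_comp hinverse, ?_⟩
  filter_upwards [hproj.continuousAt.eventually hequiv] with x ⟨e', he'⟩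
  rw [← he', ContinuousLinearMap.inverse_equiv]
  exact range_eq_range_graphMap he'.symm

lemma exists_continuousLinearEquiv_of_range_eq {k : ℕ} {T : (Fin k → ℝ) →L[ℝ] Euc n}
    (hW : finrank ℝ W = k) (hT : (W : Set (Euc n)) = range T) :
    ∃ e : (Fin k → ℝ) ≃L[ℝ] W, W.orthogonalProjectionOnto ∘L T = e := by
  have hsurj : Function.Surjective (W.orthogonalProjectionOnto ∘L T) := by
    intro w
    obtain ⟨u, hu⟩ := hT.subset w.2
    exact ⟨u, by simp [hu]⟩
  have hinj : Function.Injective (W.orthogonalProjectionOnto ∘L T) :=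
    (LinearMap.injective_iff_surjective_of_finrank_eq_finrank
      (f := (W.orthogonalProjectionOnto ∘L T : (Fin k → ℝ) →ₗ[ℝ] W)) (by simp [hW])).2 hsurj
  exact ⟨(LinearEquiv.ofBijective _ ⟨hinj, hsurj⟩).toContinuousLinearEquiv, rfl⟩

lemma IsC1PlaneField.exists_contDiffAt_eq_range_graphMap {k : ℕ} {Ω : Set (Euc n)}
    {V : Euc n → Submodule ℝ (Euc n)} (hV : IsC1PlaneField k Ω V) {x₀ : Euc n} (hx₀ : x₀ ∈ Ω) :
    ∃ N : Euc n → V x₀ →L[ℝ] (V x₀)ᗮ, ContDiffAt ℝ 1 N x₀ ∧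
      ∀ᶠ x in 𝓝 x₀, (V x : Set (Euc n)) = range (graphMap (V x₀) (N x)) := by
  obtain ⟨T, hT, hrange⟩ := hV.exists_contDiffAt_frame hx₀
  obtain ⟨e, he⟩ := exists_continuousLinearEquiv_of_range_eq (hV.2.1 x₀ hx₀) hrange.self_of_nhds
  obtain ⟨N, hN, hNrange⟩ := exists_contDiffAt_range_eq_range_graphMap hT he
  exact ⟨N, hN, hrange.and hNrange |>.mono fun x hx => hx.1.trans hx.2⟩

end PlaneFieldAsGraph

theorem IsC1PlaneField.exists_graph_hausdorffMeasure_tangencySet_pos {k : ℕ} {Ω : Set (Euc n)}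
    {V : Euc n → Submodule ℝ (Euc n)} (hV : IsC1PlaneField k Ω V) {x₀ : Euc n} (hx₀ : x₀ ∈ Ω) :
    ∃ f : V x₀ → (V x₀)ᗮ, ContDiff ℝ 1 f ∧
      (∀ α : ℝ≥0, α < 1 → MemHolder α (fderiv ℝ f)) ∧
      0 < μH[(k : ℝ)] (tangencySet (range (graphMap (V x₀) f) ∩ Ω) V) := by
  let W := V x₀
  obtain ⟨N, hN, hVN⟩ := hV.exists_contDiffAt_eq_range_graphMap hx₀
  obtain ⟨g, L, B, hL, hB, hgN⟩ := exists_lipschitzWith_norm_le_eventuallyEq hN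
  let sum : W × Wᗮ →L[ℝ] Euc n := W.subtypeL.coprod Wᗮ.subtypeL
  let p : W × Wᗮ := (W.orthogonalProjectionOnto x₀, Wᗮ.orthogonalProjectionOnto x₀)
  have hsum : sum p = x₀ := orthogonalProjectionOnto_add_orthogonal W x₀
  have hgood : {x | x ∈ Ω ∧ (V x : Set (Euc n)) = range (graphMap W (g x))} ∈ 𝓝 (sum p) := by
    rw [hsum]
    filter_upwards [hV.1.mem_nhds hx₀, hVN, hgN] with x hxΩ hx hgx
    exact ⟨hxΩ, hgx ▸ hx⟩
  have hrank : finrank ℝ (Fin k → ℝ) = finrank ℝ W := by rw [finrank_fin_fun, hV.2.1 x₀ hx₀]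
  let e : (Fin k → ℝ) ≃L[ℝ] W := ContinuousLinearEquiv.ofFinrankEq hrank
  obtain ⟨f, A, hf, hHolder, hA, hfA⟩ := exists_contDiff_fderiv_eq_of_mem_nhds e
    (fun q => hB (sum q)) (hL.comp sum.lipschitz) (sum.continuous.continuousAt hgood)
  have htangent : ∀ u ∈ A,
      graphMap W f (p.1 + e u) ∈ tangencySet (range (graphMap W f) ∩ Ω) V := by
    intro u hu
    obtain ⟨⟨hmem, hVu⟩, hderiv⟩ := hfA u hu
    refine graphMap_mem_tangencySet (z := p.1 + e u)
      (hf.differentiable one_ne_zero _).hasFDerivAt (hV.1.mem_nhds hmem) ?_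
    rw [hderiv]
    exact hVu
  exact ⟨f, hf, hHolder,
    by simpa only [Fintype.card_fin] using hausdorffMeasure_pos_of_graphMap_mem e hA htangent⟩

theorem statement4_general {k : ℕ} {Ω : Set (Euc n)} {V : Euc n → Submodule ℝ (Euc n)}
    (hV : IsC1PlaneField k Ω V) (hΩ : Ω.Nonempty) :
    ∃ S ⊆ Ω, S.Nonempty ∧ (∀ α ∈ Ioo (0 : ℝ) 1, IsC1AlphaSubmanifold k α S) ∧
      0 < μH[(k : ℝ)] (tangencySet S V) := by
  obtain ⟨x₀, hx₀⟩ := hΩ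
  obtain ⟨f, hf, hHolder, hpos⟩ := hV.exists_graph_hausdorffMeasure_tangencySet_pos hx₀
  refine ⟨range (graphMap (V x₀) f) ∩ Ω, inter_subset_right,
    (nonempty_of_measure_ne_zero hpos.ne').mono (sep_subset _ _), fun α hα => ?_, hpos⟩
  rw [← hV.2.1 x₀ hx₀]
  exact isC1AlphaSubmanifold_range_graphMap_inter hf
    (hHolder _ (Real.toNNReal_lt_one.2 hα.2)) hV.1

/-- Let `V` be a distribution of `k`-planes of class `C¹` on `ℝⁿ`.
Then there exists a `k`-dimensional embedded submanifold `S` of `ℝⁿ` of class `C^{1,α}`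
for every `α ∈ (0,1)`, such that `ℋ^k(τ(S,V)) > 0`. -/
theorem statement4 {n k : ℕ}
    (V : Euc n → Submodule ℝ (Euc n)) (hV : IsC1PlaneField k univ V) :
    ∃ S : Set (Euc n), S.Nonempty ∧
      (∀ α ∈ Ioo (0 : ℝ) 1, IsC1AlphaSubmanifold k α S) ∧
      0 < μH[(k : ℝ)] (tangencySet S V) := by
  obtain ⟨S, -, hS⟩ := statement4_general hV univ_nonempty
  exact ⟨S, hS⟩
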